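/- Let Γ=(G,𝒞) be a countable graph with finite conditions, G=(V,E), 𝒞=(m_x,n_x)_{x∈V}, such that m_x = n_x = 0 for every vertex x of infinite degree. Then there exists a countable graph H=(W,F) such that: (i) if 𝓘(G) = ∅ then 𝓘(H) = ∅; and (ii) if H admits an unfriendly partition then Γ admits an unfriendly partition. -/

import Mathlib

open Cardinal

universe u

/-- `𝓘(G)`: the largest subset `W` of the vertex set such that each element of `W` has
infinitely many neighbours in `W` (the union of all such subsets). -/
def calI {V : Type u} (G : SimpleGraph V) : Set V :=
  ⋃₀ {W : Set V | ∀ x ∈ W, (G.neighborSet x ∩ W).Infinite}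

/-- `π` is an unfriendly partition of `G`. -/
def UnfriendlyPartition {V : Type u} (G : SimpleGraph V) (π : V → Fin 2) : Prop :=
  ∀ x : V, #{y : V // G.Adj x y ∧ π y = π x} ≤ #{y : V // G.Adj x y ∧ π y ≠ π x}

/-- `π` is an unfriendly partition of the graph with conditions `(G, C)`. -/
def CondUnfriendly {V : Type u} (G : SimpleGraph V) (C : V → Cardinal.{u} × Cardinal.{u})
    (π : V → Fin 2) : Prop :=
  ∀ x : V,
    (π x = 0 →
      (C x).1 + #{y : V // G.Adj x y ∧ π y = 0} ≤ (C x).2 + #{y : V // G.Adj x y ∧ π y = 1}) ∧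
    (π x = 1 →
      (C x).2 + #{y : V // G.Adj x y ∧ π y = 1} ≤ (C x).1 + #{y : V // G.Adj x y ∧ π y = 0})

/-- Size of the `n`-th layer of the rigid ladder. -/
def lsz (n : ℕ) : ℕ := 5 * (n / 2 + 1)

/-- Layer vertices that serve as extra neighbours of `x`. -/
def Dem {V : Type u} (e : V → ℕ) (C : V → ℕ × ℕ) (x : V) (p : ℕ × ℕ) : Prop :=
  p.2 = 0 ∧ ((∃ i < (C x).1, p.1 = 2 * Nat.pair (e x) i) ∨
    ∃ i < (C x).2, p.1 = 2 * Nat.pair (e x) i + 1)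

/-- Adjacency in the rigid ladder. -/
def LAdj (p q : ℕ × ℕ) : Prop :=
  (p.1 = q.1 + 1 ∨ q.1 = p.1 + 1) ∧ p.2 < lsz p.1 ∧ q.2 < lsz q.1

/-- The graph `H`. -/
def bigH {V : Type u} (G : SimpleGraph V) (e : V → ℕ) (C : V → ℕ × ℕ) :
    SimpleGraph (V ⊕ ULift.{u} (ℕ × ℕ)) where
  Adj a b := match a, b with
    | .inl x, .inl y => G.Adj x y
    | .inl x, .inr p => Dem e C x p.down
    | .inr p, .inl x => Dem e C x p.down
    | .inr p, .inr q => LAdj p.down q.down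
  symm := ⟨by
    rintro (x | p) (y | q) h
    · exact SimpleGraph.Adj.symm h
    · exact h
    · exact h
    · exact ⟨h.1.symm, h.2.2, h.2.1⟩⟩
  loopless := ⟨by
    rintro (x | p) h
    · exact G.loopless.irrefl x h
    · have := h.1
      omega⟩

lemma dem_unique {V : Type u} {e : V → ℕ} (he : Function.Injective e) {C : V → ℕ × ℕ} {x y : V}
    {p : ℕ × ℕ} (hx : Dem e C x p) (hy : Dem e C y p) : x = y := by
  apply he
  obtain ⟨-, ⟨i, -, hi⟩ | ⟨i, -, hi⟩⟩ := hx <;> obtain ⟨-, ⟨j, -, hj⟩ | ⟨j, -, hj⟩⟩ := hy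
  · exact (Nat.pair_eq_pair.1 (show Nat.pair (e x) i = Nat.pair (e y) j by omega)).1
  · omega
  · omega
  · exact (Nat.pair_eq_pair.1 (show Nat.pair (e x) i = Nat.pair (e y) j by omega)).1

lemma unf_contra {W : Type u} {H : SimpleGraph W} {σ : W → Fin 2} (h : UnfriendlyPartition H σ)
    (u : W) (F E : Finset W) (hF : ∀ y ∈ F, H.Adj u y ∧ σ y = σ u)
    (hE : ∀ y, H.Adj u y → σ y ≠ σ u → y ∈ E) (hc : E.card < F.card) : False := by
  have h1 : (F.card : Cardinal.{u}) ≤ #{y : W // H.Adj u y ∧ σ y = σ u} := by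
    rw [← Cardinal.mk_coe_finset]
    exact Cardinal.mk_subtype_mono hF
  have h2 : #{y : W // H.Adj u y ∧ σ y ≠ σ u} ≤ (E.card : Cardinal.{u}) := by
    rw [← Cardinal.mk_coe_finset]
    exact Cardinal.mk_subtype_mono (fun y hy => hE y hy.1 hy.2)
  have h3 := (h1.trans (h u)).trans h2
  have h4 : F.card ≤ E.card := by exact_mod_cast h3
  omega

/-- The vertices of a layer with second index in `[a, lsz n)`. -/
def lay (V : Type u) (a n : ℕ) : Finset (V ⊕ ULift.{u} (ℕ × ℕ)) :=
  (Finset.Ico a (lsz n)).map ⟨fun j => Sum.inr (ULift.up (n, j)), fun i j h => by simpa using h⟩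

lemma lay_card (V : Type u) (a n : ℕ) : (lay V a n).card = lsz n - a := by simp [lay]

lemma mem_lay (V : Type u) (a n : ℕ) (y : V ⊕ ULift.{u} (ℕ × ℕ)) :
    y ∈ lay V a n ↔ ∃ j, a ≤ j ∧ j < lsz n ∧ y = Sum.inr (ULift.up (n, j)) := by
  simp only [lay, Finset.mem_map, Finset.mem_Ico, Function.Embedding.coeFn_mk]
  constructor
  · rintro ⟨j, ⟨h1, h2⟩, rfl⟩
    exact ⟨j, h1, h2, rfl⟩
  · rintro ⟨j, h1, h2, rfl⟩
    exact ⟨j, ⟨h1, h2⟩, rfl⟩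

/-- The layer before the `n`-th one. -/
def play (V : Type u) : ℕ → Finset (V ⊕ ULift.{u} (ℕ × ℕ))
  | 0 => ∅
  | n + 1 => lay V 0 n

lemma ladj_iff (V : Type u) (n j : ℕ) (hj : j < lsz n) (p : ULift.{u} (ℕ × ℕ)) :
    LAdj (n, j) p.down ↔ (Sum.inr p : V ⊕ ULift.{u} (ℕ × ℕ)) ∈ lay V 0 (n + 1) ∨
      (Sum.inr p : V ⊕ ULift.{u} (ℕ × ℕ)) ∈ play V n := by
  obtain ⟨⟨a, b⟩⟩ := p
  cases n with
  | zero =>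
    simp only [LAdj, mem_lay, play, Sum.inr.injEq, ULift.up.injEq, Prod.mk.injEq]
    constructor
    · rintro ⟨h1, h2, h3⟩
      have : a = 0 + 1 := by omega
      subst this
      exact Or.inl ⟨b, Nat.zero_le _, h3, rfl, rfl⟩
    · rintro (⟨i, -, h, rfl, rfl⟩ | h)
      · exact ⟨Or.inr rfl, hj, h⟩
      · simp at h
  | succ n =>
    simp only [LAdj, mem_lay, play, Sum.inr.injEq, ULift.up.injEq, Prod.mk.injEq]
    constructor
    · rintro ⟨h1, h2, h3⟩
      rcases h1 with h1 | h1
      · have : a = n := by omega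
        subst this
        exact Or.inr ⟨b, Nat.zero_le _, h3, rfl, rfl⟩
      · subst h1
        exact Or.inl ⟨b, Nat.zero_le _, h3, rfl, rfl⟩
    · rintro (⟨i, -, h, rfl, rfl⟩ | ⟨i, -, h, rfl, rfl⟩)
      · exact ⟨Or.inr rfl, hj, h⟩
      · exact ⟨Or.inl rfl, hj, h⟩

lemma play_disj (V : Type u) (n : ℕ) : Disjoint (lay V 0 (n + 1)) (play V n) := by
  rw [Finset.disjoint_left]
  intro y hy hy'
  rw [mem_lay] at hy
  obtain ⟨j, -, -, rfl⟩ := hy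
  cases n with
  | zero => simp [play] at hy'
  | succ n =>
    simp only [play, mem_lay] at hy'
    obtain ⟨i, -, -, h⟩ := hy'
    simp at h
    omega

lemma play_card_odd (V : Type u) (n : ℕ) : ((lay V 0 (n + 1)).card + (play V n).card) % 2 = 1 := by
  cases n with
  | zero => simp [play, lay_card, lsz]
  | succ n => simp only [play, lay_card, lsz]; omega

lemma play_card_lt (V : Type u) (n : ℕ) : (play V n).card + 2 < lsz (n + 1) - 1 := by
  cases n with
  | zero => simp [play, lsz]
  | succ n => simp only [play, lay_card, lsz]; omega

section
variable {V : Type u} {G : SimpleGraph V} {e : V → ℕ} {C : V → ℕ × ℕ}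
  {σ : V ⊕ ULift.{u} (ℕ × ℕ) → Fin 2}

lemma two_le_lsz (n : ℕ) : 1 < lsz n := by simp only [lsz]; omega

lemma layer_le (h : UnfriendlyPartition (bigH G e C) σ) (n j k : ℕ) (hj : 1 ≤ j) (hj' : j < lsz n)
    (hk : 1 ≤ k) (hk' : k < lsz n) :
    σ (Sum.inr (ULift.up (n, j))) = σ (Sum.inr (ULift.up (n, k))) := by
  classical
  by_contra hne
  set N := lay V 0 (n + 1) ∪ play V n with hN
  have hcard : N.card % 2 = 1 := by
    rw [hN, Finset.card_union_of_disjoint (play_disj V n)]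
    exact play_card_odd V n
  have hadj : ∀ i, 1 ≤ i → i < lsz n → ∀ y,
      (bigH G e C).Adj (Sum.inr (ULift.up (n, i))) y ↔ y ∈ N := by
    intro i hi hi' y
    rw [hN, Finset.mem_union]
    rcases y with x | p
    · constructor
      · intro hh
        have : i = 0 := hh.1
        omega
      · rintro (hh | hh)
        · simp [mem_lay] at hh
        · cases n with
          | zero => simp [play] at hh
          | succ n => simp [play, mem_lay] at hh
    · exact ladj_iff V n i hi' p
  have key : ∀ i, 1 ≤ i → i < lsz n →
      (N.filter (fun y => σ y = σ (Sum.inr (ULift.up (n, i))))).card ≤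
      (N.filter (fun y => ¬ σ y = σ (Sum.inr (ULift.up (n, i))))).card := by
    intro i hi hi'
    by_contra hlt
    refine unf_contra h (Sum.inr (ULift.up (n, i))) _ _ ?_ ?_ (not_le.1 hlt)
    · intro y hy
      rw [Finset.mem_filter] at hy
      exact ⟨(hadj i hi hi' y).2 hy.1, hy.2⟩
    · intro y hy hy'
      rw [Finset.mem_filter]
      exact ⟨(hadj i hi hi' y).1 hy, hy'⟩
  have k1 := key j hj hj'
  have k2 := key k hk hk'
  have hs := Finset.card_filter_add_card_filter_not (s := N)
    (fun y => σ y = σ (Sum.inr (ULift.up (n, j))))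
  have e1 : N.filter (fun y => σ y = σ (Sum.inr (ULift.up (n, k)))) =
      N.filter (fun y => ¬ σ y = σ (Sum.inr (ULift.up (n, j)))) := by
    apply Finset.filter_congr
    intro y _
    generalize σ (Sum.inr (ULift.up (n, k))) = a at *
    generalize σ (Sum.inr (ULift.up (n, j))) = b at *
    generalize σ y = c at *
    omega
  have e2 : N.filter (fun y => ¬ σ y = σ (Sum.inr (ULift.up (n, k)))) =
      N.filter (fun y => σ y = σ (Sum.inr (ULift.up (n, j)))) := by
    apply Finset.filter_congr
    intro y _
    generalize σ (Sum.inr (ULift.up (n, k))) = a at *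
    generalize σ (Sum.inr (ULift.up (n, j))) = b at *
    generalize σ y = c at *
    omega
  rw [e1, e2] at k2
  omega

lemma layer_ne (he : Function.Injective e) (h : UnfriendlyPartition (bigH G e C) σ) (n j : ℕ)
    (hj : j < lsz n) :
    σ (Sum.inr (ULift.up (n, j))) ≠ σ (Sum.inr (ULift.up (n + 1, 1))) := by
  classical
  intro heq
  obtain ⟨z, hz⟩ : ∃ z : V ⊕ ULift.{u} (ℕ × ℕ), ∀ x, Dem e C x (n, j) → Sum.inl x = z := by
    by_cases hx : ∃ x, Dem e C x (n, j)
    · obtain ⟨x, hx⟩ := hx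
      exact ⟨Sum.inl x, fun y hy => by rw [dem_unique he hx hy]⟩
    · exact ⟨Sum.inr (ULift.up (0, 0)), fun x hx' => (hx ⟨x, hx'⟩).elim⟩
  refine unf_contra h (Sum.inr (ULift.up (n, j))) (lay V 1 (n + 1))
    (insert z (insert (Sum.inr (ULift.up (n + 1, 0))) (play V n))) ?_ ?_ ?_
  · intro y hy
    rw [mem_lay] at hy
    obtain ⟨i, hi, hi', rfl⟩ := hy
    refine ⟨⟨Or.inr rfl, hj, hi'⟩, ?_⟩
    rw [heq]
    exact layer_le h _ _ _ hi hi' le_rfl (two_le_lsz _)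
  · rintro (x | p) hy hne
    · rw [Finset.mem_insert]
      exact Or.inl (hz x hy)
    · rw [Finset.mem_insert, Finset.mem_insert]
      right
      rcases (ladj_iff V n j hj p).1 hy with hp | hp
      · left
        rw [mem_lay] at hp
        obtain ⟨i, -, hi, hp⟩ := hp
        rw [hp] at hne ⊢
        rcases Nat.eq_zero_or_pos i with rfl | hpos
        · rfl
        · exfalso
          apply hne
          rw [heq]
          exact layer_le h _ _ _ hpos hi le_rfl (two_le_lsz _)
      · exact Or.inr hp
  · rw [lay_card]
    have h1 := Finset.card_insert_le z (insert (Sum.inr (ULift.up (n + 1, 0))) (play V n))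
    have h2 := Finset.card_insert_le (Sum.inr (ULift.up (n + 1, 0))) (play V n)
    have h3 := play_card_lt V n
    omega

lemma slack_col (he : Function.Injective e) (h : UnfriendlyPartition (bigH G e C) σ) (n : ℕ) :
    σ (Sum.inr (ULift.up (n, 0))) = σ (Sum.inr (ULift.up (0, 0))) ↔ n % 2 = 0 := by
  have a0 : ∀ n, σ (Sum.inr (ULift.up (n, 0))) ≠ σ (Sum.inr (ULift.up (n + 1, 1))) :=
    fun n => layer_ne he h n 0 (by have := two_le_lsz n; omega)
  have a1 : ∀ n, σ (Sum.inr (ULift.up (n, 1))) ≠ σ (Sum.inr (ULift.up (n + 1, 1))) :=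
    fun n => layer_ne he h n 1 (two_le_lsz n)
  induction n with
  | zero => simp
  | succ n ih =>
    have b1 := a0 n
    have b2 := a0 (n + 1)
    have b3 := a1 (n + 1)
    generalize σ (Sum.inr (ULift.up (n, 0))) = c1 at *
    generalize σ (Sum.inr (ULift.up (n + 1, 0))) = c2 at *
    generalize σ (Sum.inr (ULift.up (n + 1, 1))) = c3 at *
    generalize σ (Sum.inr (ULift.up (n + 1 + 1, 1))) = c4 at *
    generalize σ (Sum.inr (ULift.up (0, 0))) = c5 at *
    omega

lemma dem_card (Q : ULift.{u} (ℕ × ℕ) → Prop) (k m c : ℕ)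
    (hQ : ∀ p, Q p ↔ p.down.2 = 0 ∧ ∃ i < m, p.down.1 = 2 * Nat.pair k i + c) :
    #{p : ULift.{u} (ℕ × ℕ) // Q p} = (m : Cardinal.{u}) := by
  let F : Finset (ULift.{u} (ℕ × ℕ)) := (Finset.range m).map
    ⟨fun i => ULift.up (2 * Nat.pair k i + c, 0), fun i j h => by
      have h' : 2 * Nat.pair k i + c = 2 * Nat.pair k j + c := by simpa using h
      exact (Nat.pair_eq_pair.1 (show Nat.pair k i = Nat.pair k j by omega)).2⟩
  have hF : F.card = m := by simp [F]
  rw [← hF, ← Cardinal.mk_coe_finset]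
  apply Cardinal.mk_congr
  apply Equiv.subtypeEquivRight
  rintro ⟨⟨a, b⟩⟩
  rw [hQ]
  simp only [F, Finset.mem_map, Finset.mem_range, Function.Embedding.coeFn_mk, ULift.up.injEq,
    Prod.mk.injEq]
  constructor
  · rintro ⟨rfl, i, hi, rfl⟩
    exact ⟨i, hi, rfl⟩
  · rintro ⟨i, hi, hh⟩
    cases hh
    exact ⟨rfl, i, hi, rfl⟩

lemma split_card (P : V ⊕ ULift.{u} (ℕ × ℕ) → Prop) :
    #{y // P y} = #{p // P (Sum.inr p)} + #{x // P (Sum.inl x)} := by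
  rw [Cardinal.mk_congr (Equiv.subtypeSum (p := P)), add_comm]
  simp

lemma calI_big (hG : calI G = ∅) (he : Function.Injective e) : calI (bigH G e C) = ∅ := by
  classical
  rw [Set.eq_empty_iff_forall_notMem]
  rintro w ⟨S, hS, hw⟩
  have hinr : ∀ p, Sum.inr p ∉ S := by
    rintro ⟨⟨n, j⟩⟩ hp
    refine hS _ hp ?_
    apply Set.Finite.subset (s := (↑(lay V 0 (n + 1) ∪ play V n) : Set _) ∪
      Sum.inl '' {x | Dem e C x (n, j)})
    · apply (Finset.finite_toSet _).union
      apply Set.Finite.image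
      apply Set.Subsingleton.finite
      intro x hx y hy
      exact dem_unique he hx hy
    · rintro (x | q) ⟨hq, -⟩
      · exact Or.inr ⟨x, hq, rfl⟩
      · left
        have hq' : LAdj (n, j) q.down := hq
        have := (ladj_iff V n j hq'.2.1 q).1 hq'
        simpa using this
  rcases w with x | p
  · have : x ∈ calI G := by
      refine ⟨Sum.inl ⁻¹' S, ?_, hw⟩
      intro y hy hfin
      refine hS _ hy ?_
      apply (hfin.image Sum.inl).subset
      rintro (z | q) ⟨hz, hz'⟩
      · exact ⟨z, ⟨hz, hz'⟩, rfl⟩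
      · exact (hinr q hz').elim
    rw [hG] at this
    exact this
  · exact hinr p hw
end

theorem stmt9 {V : Type u} [Countable V] (G : SimpleGraph V) (C : V → ℕ × ℕ)
    (hC : ∀ x : V, (G.neighborSet x).Infinite → C x = (0, 0)) :
    ∃ (W : Type u) (_ : Countable W) (H : SimpleGraph W),
      (calI G = ∅ → calI H = ∅) ∧
      ((∃ σ : W → Fin 2, UnfriendlyPartition H σ) →
        ∃ π : V → Fin 2,
          CondUnfriendly G (fun x => (((C x).1 : Cardinal.{u}), ((C x).2 : Cardinal.{u}))) π) := by
  classical
  obtain ⟨e, he⟩ := exists_injective_nat V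
  refine ⟨V ⊕ ULift.{u} (ℕ × ℕ), inferInstance, bigH G e C, fun hG => calI_big hG he, ?_⟩
  rintro ⟨σ, h⟩
  have hsl := slack_col he h
  set ρ := σ (Sum.inr (ULift.up (0, 0))) with hρ
  refine ⟨fun x => if σ (Sum.inl x) = ρ then 0 else 1, ?_⟩
  intro x
  have c0 : #{y // (bigH G e C).Adj (Sum.inl x) y ∧ σ y = ρ} =
      ((C x).1 : Cardinal.{u}) +
        #{y : V // G.Adj x y ∧ (if σ (Sum.inl y) = ρ then (0 : Fin 2) else 1) = 0} := by
    rw [split_card]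
    congr 1
    · apply dem_card _ (e x) _ 0
      rintro ⟨⟨n, j⟩⟩
      constructor
      · rintro ⟨⟨hj, ⟨i, hi, hn⟩ | ⟨i, hi, hn⟩⟩, hs⟩
        · exact ⟨hj, i, hi, hn⟩
        · simp only at hj hn
          subst hj
          have := (hsl n).1 hs
          omega
      · rintro ⟨hj, i, hi, hn⟩
        refine ⟨⟨hj, Or.inl ⟨i, hi, hn⟩⟩, ?_⟩
        simp only at hj hn
        subst hj
        exact (hsl n).2 (by omega)
    · apply Cardinal.mk_congr
      apply Equiv.subtypeEquivRight
      intro y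
      by_cases hy : σ (Sum.inl y) = ρ <;> simp [hy, bigH]
  have c1 : #{y // (bigH G e C).Adj (Sum.inl x) y ∧ σ y ≠ ρ} =
      ((C x).2 : Cardinal.{u}) +
        #{y : V // G.Adj x y ∧ (if σ (Sum.inl y) = ρ then (0 : Fin 2) else 1) = 1} := by
    rw [split_card]
    congr 1
    · apply dem_card _ (e x) _ 1
      rintro ⟨⟨n, j⟩⟩
      constructor
      · rintro ⟨⟨hj, ⟨i, hi, hn⟩ | ⟨i, hi, hn⟩⟩, hs⟩
        · simp only at hj hn
          subst hj
          exact (hs ((hsl n).2 (by omega))).elim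
        · exact ⟨hj, i, hi, hn⟩
      · rintro ⟨hj, i, hi, hn⟩
        refine ⟨⟨hj, Or.inr ⟨i, hi, hn⟩⟩, ?_⟩
        simp only at hj hn
        subst hj
        intro hs
        have := (hsl n).1 hs
        omega
    · apply Cardinal.mk_congr
      apply Equiv.subtypeEquivRight
      intro y
      by_cases hy : σ (Sum.inl y) = ρ <;> simp [hy, bigH]
  have hx := h (Sum.inl x)
  constructor
  · intro h0
    have h0' : σ (Sum.inl x) = ρ := by
      by_contra hne
      simp [hne] at h0
    rw [h0'] at hx
    rw [c0, c1] at hx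
    exact hx
  · intro h1
    have h1' : σ (Sum.inl x) ≠ ρ := by
      intro hne
      simp [hne] at h1
    have q1 : ∀ c : Fin 2, c = σ (Sum.inl x) ↔ c ≠ ρ := by
      intro c
      generalize σ (Sum.inl x) = a at *
      generalize ρ = b at *
      omega
    have q2 : ∀ c : Fin 2, c ≠ σ (Sum.inl x) ↔ c = ρ := by
      intro c
      rw [ne_eq, q1 c, ne_eq, not_not]
    simp only [q2] at hx
    simp only [q1] at hx
    rw [c0, c1] at hx
    exact hx
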